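/- Strong duality for finite-horizon Markov decision processes (Theorem 1(b)): assume V_0,…,V_K are bounded measurable functions satisfying the Bellman recursion V_K = Λ and V_k(x) = sup_{a ∈ 𝒜} { g_k(x, a) + ∫_𝒱 V_{k+1}(f(x, a, v')) μ(dv') } for k < K, and define the value-function-based penalty M*(a, v) := Σ_{k=0}^{K−1} ( V_{k+1}(x_{k+1}) − ∫_𝒱 V_{k+1}(f(x_k, a_k, v')) μ(dv') ). Then for every initial state x, 𝔼_{v ∼ μ^{⊗K}}[ sup_{a ∈ 𝒜^K} ( Σ_{k=0}^{K−1} g_k(x_k, a_k) + Λ(x_K) − M*(a, v) ) ] = V_0(x). -/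

import Mathlib

open MeasureTheory

/-- The controlled trajectory of a finite-horizon MDP: `x_0 = x`,
`x_{k+1} = f x_k a_k v_{k+1}` for `k < K` (constant after time `K`). -/
def mdpTraj {X A V : Type*} (f : X → A → V → X) (K : ℕ) (x : X)
    (a : Fin K → A) (v : Fin K → V) : ℕ → X
  | 0 => x
  | n + 1 =>
    if h : n < K then f (mdpTraj f K x a v n) (a ⟨n, h⟩) (v ⟨n, h⟩)
    else mdpTraj f K x a v n

/-- Total reward `Σ_{k=0}^{K-1} g_k(x_k, a_k) + Λ(x_K)` of the action sequence `a`
under the noise realization `v`, starting from `x`. -/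
def mdpReward {X A V : Type*} (f : X → A → V → X) (K : ℕ)
    (g : ℕ → X → A → ℝ) (Λ : X → ℝ) (x : X) (a : Fin K → A) (v : Fin K → V) : ℝ :=
  (∑ k : Fin K, g k (mdpTraj f K x a v k) (a k)) + Λ (mdpTraj f K x a v K)

/-- The value-function-based penalty
`M*(a,v) = Σ_{k=0}^{K-1} ( W_{k+1}(x_{k+1}) - ∫ W_{k+1}(f(x_k, a_k, v')) μ(dv') )`,
where `x_k` is the trajectory generated from `x` by `(a, v)` and `W_k` are the
value functions. -/
noncomputable def MstarPenalty {X A V : Type*} [MeasurableSpace V] (f : X → A → V → X)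
    (K : ℕ) (W : ℕ → X → ℝ) (μ : Measure V) (x : X) (a : Fin K → A) (v : Fin K → V) : ℝ :=
  ∑ k : Fin K,
    (W ((k : ℕ) + 1) (mdpTraj f K x a v ((k : ℕ) + 1)) -
      ∫ v', W ((k : ℕ) + 1) (f (mdpTraj f K x a v (k : ℕ)) (a k) v') ∂μ)

/-- The penalized reward telescopes: it is the value `W 0 x` plus the sum of the Bellman residuals
along the trajectory. -/
lemma mdpReward_sub_MstarPenalty {X A V : Type*} [MeasurableSpace V] (f : X → A → V → X) (K : ℕ)
    (g : ℕ → X → A → ℝ) (Λ : X → ℝ) (W : ℕ → X → ℝ) (hWK : ∀ x, W K x = Λ x) (μ : Measure V)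
    (x : X) (a : Fin K → A) (v : Fin K → V) :
    mdpReward f K g Λ x a v - MstarPenalty f K W μ x a v =
      W 0 x + ∑ k : Fin K, (g k (mdpTraj f K x a v k) (a k) +
        (∫ v', W (k + 1) (f (mdpTraj f K x a v k) (a k) v') ∂μ) - W k (mdpTraj f K x a v k)) := by
  have htel : ∑ k : Fin K, (W (k + 1) (mdpTraj f K x a v (k + 1)) - W k (mdpTraj f K x a v k)) =
      W K (mdpTraj f K x a v K) - W 0 x := by
    rw [Fin.sum_univ_eq_sum_range
      (fun k => W (k + 1) (mdpTraj f K x a v (k + 1)) - W k (mdpTraj f K x a v k)),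
      Finset.sum_range_sub (fun k => W k (mdpTraj f K x a v k))]
    rfl
  simp only [mdpReward, MstarPenalty, ← hWK, Finset.sum_sub_distrib, Finset.sum_add_distrib]
    at htel ⊢
  linarith

/-- Every feedback policy `π` is realized by an open-loop action sequence along a given noise
realization. -/
lemma exists_actions_eq_policy {X A V : Type*} (f : X → A → V → X) (K : ℕ) (x : X)
    (v : Fin K → V) (π : ℕ → X → A) :
    ∃ a : Fin K → A, ∀ k : Fin K, a k = π k (mdpTraj f K x a v k) := by
  let y : ℕ → X := fun n => Nat.rec x
    (fun n z => if h : n < K then f z (π n z) (v ⟨n, h⟩) else z) n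
  have hy : ∀ n, mdpTraj f K x (fun k => π k (y k)) v n = y n := by
    intro n
    induction n with
    | zero => rfl
    | succ n ih => simp only [mdpTraj, ih]; rfl
  exact ⟨fun k => π k (y k), fun k => by rw [hy]⟩

/-- If `W` solves the Bellman recursion, the penalized inner problem has optimal value `W 0 x` for
every noise realization. -/
lemma iSup_mdpReward_sub_MstarPenalty {X A V : Type*} [MeasurableSpace V] [Nonempty A]
    (f : X → A → V → X) (K : ℕ) (g : ℕ → X → A → ℝ) (Λ : X → ℝ) (W : ℕ → X → ℝ)
    (hWK : ∀ x, W K x = Λ x) (μ : Measure V)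
    (hbdd : ∀ k x, BddAbove (Set.range fun a : A => g k x a + ∫ v', W (k + 1) (f x a v') ∂μ))
    (hBellman : ∀ k < K, ∀ x : X,
      W k x = ⨆ a : A, (g k x a + ∫ v', W (k + 1) (f x a v') ∂μ))
    (x : X) (v : Fin K → V) :
    ⨆ a : Fin K → A, (mdpReward f K g Λ x a v - MstarPenalty f K W μ x a v) = W 0 x := by
  simp only [mdpReward_sub_MstarPenalty f K g Λ W hWK]
  refine ciSup_eq_of_forall_le_of_forall_lt_exists_gt (fun a => ?_) (fun w hw => ?_)
  · have : ∑ k : Fin K, (g k (mdpTraj f K x a v k) (a k) +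
        (∫ v', W (k + 1) (f (mdpTraj f K x a v k) (a k) v') ∂μ) -
          W k (mdpTraj f K x a v k)) ≤ 0 := by
      refine Finset.sum_nonpos fun k _ => ?_
      rw [hBellman k k.2, sub_nonpos]
      exact le_ciSup (hbdd k (mdpTraj f K x a v k)) (a k)
    linarith
  · obtain ⟨ε, hε, hεw⟩ : ∃ ε > 0, K * ε < W 0 x - w := by
      refine ⟨(W 0 x - w) / (K + 1), div_pos (sub_pos.2 hw) (by positivity), ?_⟩
      rw [← mul_div_assoc, div_lt_iff₀ (by positivity)]
      nlinarith
    have hex : ∀ (k : ℕ) (z : X), ∃ a : A, k < K →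
        W k z - ε < g k z a + ∫ v', W (k + 1) (f z a v') ∂μ := by
      intro k z
      by_cases hk : k < K
      · obtain ⟨a, ha⟩ := exists_lt_of_lt_ciSup
          ((sub_lt_self (W k z) hε).trans_eq (hBellman k hk z))
        exact ⟨a, fun _ => ha⟩
      · exact ⟨Classical.arbitrary A, fun h => absurd h hk⟩
    choose π hπ using hex
    obtain ⟨a, ha⟩ := exists_actions_eq_policy f K x v π
    refine ⟨a, ?_⟩
    have : ∑ _k : Fin K, (-ε) ≤ ∑ k : Fin K, (g k (mdpTraj f K x a v k) (a k) +
        (∫ v', W (k + 1) (f (mdpTraj f K x a v k) (a k) v') ∂μ) -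
          W k (mdpTraj f K x a v k)) := by
      refine Finset.sum_le_sum fun k _ => ?_
      have := hπ k (mdpTraj f K x a v k) k.2
      rw [← ha k] at this
      linarith
    simp only [Finset.sum_const, Finset.card_univ, Fintype.card_fin, nsmul_eq_mul] at this
    linarith

/-- **Strong duality for finite-horizon Markov decision processes** (Theorem 1(b)).
If the bounded measurable functions `W_0, …, W_K` satisfy the Bellman recursion
`W_K = Λ` and `W_k(x) = sup_{a ∈ 𝒜} { g_k(x,a) + ∫ W_{k+1}(f(x,a,v')) μ(dv') }` for `k < K`,
and `M*` is the value-function-based penalty, then for every initial state `x`, the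
expectation under the product noise law `μ^{⊗K}` of the optimal value of the inner
optimization problem equals the dynamic-programming value:
`𝔼_{v ∼ μ^{⊗K}}[ sup_{a ∈ 𝒜^K} ( Σ_k g_k(x_k,a_k) + Λ(x_K) - M*(a,v) ) ] = W_0(x)`. -/
theorem mdp_strong_duality
    {X A V : Type*} [MeasurableSpace X] [MeasurableSpace A] [MeasurableSpace V]
    [Nonempty A]
    (μ : Measure V) [IsProbabilityMeasure μ]
    (K : ℕ) (hK : 1 ≤ K)
    (f : X → A → V → X) (hf : Measurable fun q : X × A × V => f q.1 q.2.1 q.2.2)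
    (g : ℕ → X → A → ℝ) (hg : ∀ k, Measurable fun q : X × A => g k q.1 q.2)
    (hgbd : ∃ C, ∀ k x a, |g k x a| ≤ C)
    (Λ : X → ℝ) (hΛ : Measurable Λ) (hΛbd : ∃ C, ∀ x, |Λ x| ≤ C)
    (W : ℕ → X → ℝ) (hWmeas : ∀ k, Measurable (W k)) (hWbd : ∃ C, ∀ k x, |W k x| ≤ C)
    (hWK : ∀ x, W K x = Λ x)
    (hBellman : ∀ k < K, ∀ x : X,
      W k x = ⨆ a : A, (g k x a + ∫ v', W (k + 1) (f x a v') ∂μ)) :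
    ∀ x : X,
      (∫ v, (⨆ a : Fin K → A,
          (mdpReward f K g Λ x a v - MstarPenalty f K W μ x a v))
        ∂(Measure.pi fun _ : Fin K => μ)) = W 0 x := by
  intro x
  obtain ⟨C, hC⟩ := hgbd
  obtain ⟨D, hD⟩ := hWbd
  have hbdd : ∀ k x,
      BddAbove (Set.range fun a : A => g k x a + ∫ v', W (k + 1) (f x a v') ∂μ) := by
    intro k x
    refine ⟨C + D, ?_⟩
    rintro _ ⟨a, rfl⟩
    have hbound := norm_integral_le_of_norm_le_const (μ := μ)
      (f := fun v' => W (k + 1) (f x a v')) (C := D)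
      (ae_of_all μ fun v' => hD (k + 1) (f x a v'))
    rw [probReal_univ, mul_one] at hbound
    exact add_le_add ((le_abs_self _).trans (hC k x a)) ((le_abs_self _).trans hbound)
  simp only [iSup_mdpReward_sub_MstarPenalty f K g Λ W hWK μ hbdd hBellman x, integral_const,
    probReal_univ, one_smul]
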